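/- arXiv:quant-ph/0407097 — 3 statements merged into one kernel-verified Lean document; each statement's English description precedes it below -/
import Mathlib

section
/- For any d ≥ 1 and each j ∈ {1, 2, 3}, the partial trace over the j-th tensor factor of the orthogonal projection Q_d = (1/6)·{ I − V_d⊗I − I⊗V_d − (I⊗V_d)(V_d⊗I)(I⊗V_d) + (I⊗V_d)(V_d⊗I) + (V_d⊗I)(I⊗V_d) } on ℂ^d ⊗ ℂ^d ⊗ ℂ^d equals ((d−2)/6)·(I − V_d), an operator on ℂ^d ⊗ ℂ^d. -/
open Matrix Kronecker

/-- The flip (swap) operator `V_d` on `ℂ^d ⊗ ℂ^d`, modeled as a matrix: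
`V_d (ψ₁ ⊗ ψ₂) = ψ₂ ⊗ ψ₁`. -/
def flipM (d : ℕ) : Matrix (Fin d × Fin d) (Fin d × Fin d) ℂ :=
  fun p q => if p.1 = q.2 ∧ p.2 = q.1 then 1 else 0

/-- `V_d ⊗ I` on `ℂ^d ⊗ ℂ^d ⊗ ℂ^d`: the Kronecker product `V_d ⊗ₖ I`, reindexed by the
associativity equivalence to the index type `Fin d × Fin d × Fin d`. -/
def V12 (d : ℕ) : Matrix (Fin d × Fin d × Fin d) (Fin d × Fin d × Fin d) ℂ :=
  Matrix.reindex (Equiv.prodAssoc (Fin d) (Fin d) (Fin d))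
    (Equiv.prodAssoc (Fin d) (Fin d) (Fin d))
    (flipM d ⊗ₖ (1 : Matrix (Fin d) (Fin d) ℂ))

/-- `I ⊗ V_d` on `ℂ^d ⊗ ℂ^d ⊗ ℂ^d`. -/
def V23 (d : ℕ) : Matrix (Fin d × Fin d × Fin d) (Fin d × Fin d × Fin d) ℂ :=
  (1 : Matrix (Fin d) (Fin d) ℂ) ⊗ₖ flipM d

/-- `Q_d = (1/6)·{ I − V_d⊗I − I⊗V_d − (I⊗V_d)(V_d⊗I)(I⊗V_d)
      + (I⊗V_d)(V_d⊗I) + (V_d⊗I)(I⊗V_d) }` on `ℂ^d ⊗ ℂ^d ⊗ ℂ^d`. -/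
noncomputable def Q (d : ℕ) : Matrix (Fin d × Fin d × Fin d) (Fin d × Fin d × Fin d) ℂ :=
  ((6 : ℂ)⁻¹) • ((1 : Matrix (Fin d × Fin d × Fin d) (Fin d × Fin d × Fin d) ℂ)
    - V12 d - V23 d - V23 d * V12 d * V23 d + V23 d * V12 d + V12 d * V23 d)


/-- The partial trace over the `j`-th tensor factor (`j = 0,1,2` for the first, second,
third factor) of an operator on `ℂ^d ⊗ ℂ^d ⊗ ℂ^d`, yielding an operator on `ℂ^d ⊗ ℂ^d`. -/
noncomputable def ptr (d : ℕ) (j : Fin 3)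
    (T : Matrix (Fin d × Fin d × Fin d) (Fin d × Fin d × Fin d) ℂ) :
    Matrix (Fin d × Fin d) (Fin d × Fin d) ℂ :=
  match j with
  | 0 => fun p q => ∑ k : Fin d, T (k, p.1, p.2) (k, q.1, q.2)
  | 1 => fun p q => ∑ k : Fin d, T (p.1, k, p.2) (q.1, k, q.2)
  | 2 => fun p q => ∑ k : Fin d, T (p.1, p.2, k) (q.1, q.2, k)

theorem V12_entry (d : ℕ) (a b c x y z : Fin d) : V12 d (a, b, c) (x, y, z)
    = (if a = y then 1 else 0) * (if b = x then 1 else 0) * (if c = z then 1 else 0) := by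
  simp [V12, flipM, Matrix.one_apply, ite_and]
  split_ifs <;> rfl

theorem V23_entry (d : ℕ) (a b c x y z : Fin d) : V23 d (a, b, c) (x, y, z)
    = (if a = x then 1 else 0) * (if b = z then 1 else 0) * (if c = y then 1 else 0) := by
  simp [V23, flipM, Matrix.one_apply, ite_and]
  split_ifs <;> rfl

theorem V12_mul_entry (d : ℕ) (M : Matrix (Fin d × Fin d × Fin d) (Fin d × Fin d × Fin d) ℂ)
    (a b c : Fin d) (q : Fin d × Fin d × Fin d) :
    (V12 d * M) (a, b, c) q = M (b, a, c) q := by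
  simp [Matrix.mul_apply, Fintype.sum_prod_type, V12_entry]

theorem V23_mul_entry (d : ℕ) (M : Matrix (Fin d × Fin d × Fin d) (Fin d × Fin d × Fin d) ℂ)
    (a b c : Fin d) (q : Fin d × Fin d × Fin d) :
    (V23 d * M) (a, b, c) q = M (a, c, b) q := by
  simp [Matrix.mul_apply, Fintype.sum_prod_type, V23_entry]

theorem one_entry (d : ℕ) (a b c x y z : Fin d) :
    (1 : Matrix (Fin d × Fin d × Fin d) (Fin d × Fin d × Fin d) ℂ) (a, b, c) (x, y, z)
    = (if a = x then 1 else 0) * (if b = y then 1 else 0) * (if c = z then 1 else 0) := by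
  simp [Matrix.one_apply, Prod.ext_iff, ite_and]
  split_ifs <;> rfl

theorem Q_entry (d : ℕ) (a b c x y z : Fin d) : Q d (a, b, c) (x, y, z) = (6 : ℂ)⁻¹ *
    ((if a = x then 1 else 0) * (if b = y then 1 else 0) * (if c = z then 1 else 0)
    - (if a = y then 1 else 0) * (if b = x then 1 else 0) * (if c = z then 1 else 0)
    - (if a = x then 1 else 0) * (if b = z then 1 else 0) * (if c = y then 1 else 0)
    - (if a = z then 1 else 0) * (if c = x then 1 else 0) * (if b = y then 1 else 0)
    + (if a = y then 1 else 0) * (if c = x then 1 else 0) * (if b = z then 1 else 0)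
    + (if b = x then 1 else 0) * (if a = z then 1 else 0) * (if c = y then 1 else 0)) := by
  simp only [Q, Matrix.smul_apply, Matrix.add_apply, Matrix.sub_apply, Matrix.mul_assoc,
    V12_mul_entry, V23_mul_entry, V12_entry, V23_entry, one_entry, smul_eq_mul]
  ring

/-- For any `d ≥ 1` and each `j ∈ {1,2,3}`, the partial trace over the `j`-th tensor factor
of `Q_d` equals `((d−2)/6)·(I − V_d)` on `ℂ^d ⊗ ℂ^d`. -/
theorem Q_partialTrace (d : ℕ) (hd : 1 ≤ d) (j : Fin 3) :
    ptr d j (Q d)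
      = (((d : ℂ) - 2) / 6) • ((1 : Matrix (Fin d × Fin d) (Fin d × Fin d) ℂ) - flipM d) := by
  ext ⟨a, b⟩ ⟨x, y⟩
  fin_cases j <;>
  simp only [ptr, Q_entry, ← Finset.mul_sum, Finset.sum_add_distrib, Finset.sum_sub_distrib] <;>
  simp [flipM, Matrix.one_apply, Prod.ext_iff, ite_and, eq_comm] <;>
  split_ifs <;> simp_all <;> ring
end

section
/- The operator T₂ = (1/4)·I − (1/8)·V₂⊗I − (1/8)·(I⊗V₂)(V₂⊗I)(I⊗V₂) on ℂ² ⊗ ℂ² ⊗ ℂ² is a density operator: it is positive semidefinite and has trace 1. -/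
open Matrix Kronecker ComplexOrder

/-- The density source-operator
`T₂ = (1/4)·I − (1/8)·V₂⊗I − (1/8)·(I⊗V₂)(V₂⊗I)(I⊗V₂)` on `ℂ² ⊗ ℂ² ⊗ ℂ²`. -/
noncomputable def T2 : Matrix (Fin 2 × Fin 2 × Fin 2) (Fin 2 × Fin 2 × Fin 2) ℂ :=
  ((4 : ℂ)⁻¹) • (1 : Matrix (Fin 2 × Fin 2 × Fin 2) (Fin 2 × Fin 2 × Fin 2) ℂ)
    - ((8 : ℂ)⁻¹) • V12 2 - ((8 : ℂ)⁻¹) • (V23 2 * V12 2 * V23 2)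

lemma flipM_sq (d : ℕ) : flipM d * flipM d = 1 := by
  ext ⟨a, b⟩ ⟨c, e⟩
  rw [Matrix.mul_apply, Finset.sum_eq_single (b, a)]
  · simp [flipM, Matrix.one_apply, and_comm]
  · rintro ⟨x, y⟩ _ h
    have : ¬ (a = y ∧ b = x) := fun ⟨h1, h2⟩ => h (by rw [h1, h2])
    simp [flipM, this]
  · simp

lemma flipM_herm (d : ℕ) : (flipM d)ᴴ = flipM d := by
  ext ⟨a, b⟩ ⟨c, e⟩
  simp only [Matrix.conjTranspose_apply, flipM]
  split_ifs <;> simp_all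

lemma V12_sq (d : ℕ) : V12 d * V12 d = 1 := by
  simp only [V12, Matrix.reindex_apply]
  rw [Matrix.submatrix_mul_equiv, ← Matrix.mul_kronecker_mul, flipM_sq]
  simp

lemma V12_herm (d : ℕ) : (V12 d)ᴴ = V12 d := by
  simp only [V12, Matrix.reindex_apply]
  rw [Matrix.conjTranspose_submatrix, Matrix.conjTranspose_kronecker, flipM_herm]
  simp

lemma V23_sq (d : ℕ) : V23 d * V23 d = 1 := by
  simp only [V23]
  rw [← Matrix.mul_kronecker_mul, flipM_sq]
  simp

lemma V23_herm (d : ℕ) : (V23 d)ᴴ = V23 d := by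
  simp only [V23]
  rw [Matrix.conjTranspose_kronecker, flipM_herm]
  simp

/-- For a Hermitian involution `V`, `1 - V = (1/2) (1 - V)ᴴ (1 - V)` is positive semidefinite. -/
lemma one_sub_posSemidef {n : Type*} [Fintype n] [DecidableEq n] (V : Matrix n n ℂ)
    (h : Vᴴ = V) (h2 : V * V = 1) : (1 - V).PosSemidef := by
  have e : 1 - V = (2 : ℂ)⁻¹ • ((1 - V)ᴴ * (1 - V)) := by
    have : (1 - V)ᴴ * (1 - V) = (2 : ℂ) • (1 - V) := by
      rw [Matrix.conjTranspose_sub, h, Matrix.conjTranspose_one, two_smul]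
      have : (1 - V) * (1 - V) = 1 - V - V + V * V := by noncomm_ring
      rw [this, h2]
      abel
    rw [this, smul_smul]
    norm_num
  rw [e]
  exact (Matrix.posSemidef_conjTranspose_mul_self _).smul (by positivity)

lemma V12_trace : (V12 2).trace = 4 := by
  simp only [Matrix.trace, Fintype.sum_prod_type, Fin.sum_univ_two]
  simp [V12, flipM]
  norm_num

/-- `T₂` is a density operator: positive semidefinite with trace `1`. -/
theorem T2_isDensityOperator : T2.PosSemidef ∧ T2.trace = 1 := by
  have hW : (V23 2 * V12 2 * V23 2)ᴴ = V23 2 * V12 2 * V23 2 := by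
    rw [Matrix.conjTranspose_mul, Matrix.conjTranspose_mul, V23_herm, V12_herm, Matrix.mul_assoc]
  have hW2 : (V23 2 * V12 2 * V23 2) * (V23 2 * V12 2 * V23 2) = 1 := by
    calc _ = V23 2 * V12 2 * (V23 2 * V23 2) * V12 2 * V23 2 := by noncomm_ring
      _ = V23 2 * (V12 2 * V12 2) * V23 2 := by rw [V23_sq]; noncomm_ring
      _ = 1 := by rw [V12_sq, Matrix.mul_one, V23_sq]
  constructor
  · have e : T2 = (8 : ℂ)⁻¹ • ((1 - V12 2) + (1 - V23 2 * V12 2 * V23 2)) := by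
      unfold T2
      module
    rw [e]
    exact ((one_sub_posSemidef _ (V12_herm 2) (V12_sq 2)).add
      (one_sub_posSemidef _ hW hW2)).smul (by positivity)
  · have t : (V23 2 * V12 2 * V23 2).trace = 4 := by
      rw [Matrix.trace_mul_comm, ← Matrix.mul_assoc, V23_sq, Matrix.one_mul, V12_trace]
    unfold T2
    rw [Matrix.trace_sub, Matrix.trace_sub, Matrix.trace_smul, Matrix.trace_smul,
      Matrix.trace_smul, t, V12_trace, Matrix.trace_one]
    simp
    norm_num
end

section
/- For the operator T₂ = (1/4)·I − (1/8)·V₂⊗I − (1/8)·(I⊗V₂)(V₂⊗I)(I⊗V₂) on ℂ² ⊗ ℂ² ⊗ ℂ², the partial trace over the second tensor factor and the partial trace over the third tensor factor both equal the two-qubit Werner state ρ₂ = (3/8)·I − (1/4)·V₂ on ℂ² ⊗ ℂ². -/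
open Matrix Kronecker

/-- The two-qubit Werner state `ρ₂ = (3/8)·I − (1/4)·V₂` on `ℂ² ⊗ ℂ²`. -/
noncomputable def werner2 : Matrix (Fin 2 × Fin 2) (Fin 2 × Fin 2) ℂ :=
  ((3 : ℂ) / 8) • (1 : Matrix (Fin 2 × Fin 2) (Fin 2 × Fin 2) ℂ) - ((4 : ℂ)⁻¹) • flipM 2

/-- The partial traces of `T₂` over the second and over the third tensor factor both
equal the two-qubit Werner state `ρ₂ = (3/8)·I − (1/4)·V₂`. -/
theorem T2_partialTraces_eq_werner :
    ptr 2 1 T2 = werner2 ∧ ptr 2 2 T2 = werner2 := by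
  have h1 : ∀ p q : Fin 2 × Fin 2 × Fin 2, V12 2 p q =
      if p.1 = q.2.1 ∧ p.2.1 = q.1 ∧ p.2.2 = q.2.2 then 1 else 0 := by
    rintro ⟨a, b, c⟩ ⟨x, y, z⟩
    simp only [V12, flipM, Matrix.reindex_apply, Matrix.submatrix_apply,
      Equiv.prodAssoc_symm_apply, Matrix.kroneckerMap_apply, Matrix.one_apply]
    split_ifs <;> simp_all
  have h2 : ∀ p q : Fin 2 × Fin 2 × Fin 2, V23 2 p q =
      if q = (p.1, p.2.2, p.2.1) then 1 else 0 := by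
    rintro ⟨a, b, c⟩ ⟨x, y, z⟩
    simp only [V23, flipM, Matrix.kroneckerMap_apply, Matrix.one_apply, Prod.mk.injEq]
    split_ifs <;> simp_all
  have h2' : ∀ p q : Fin 2 × Fin 2 × Fin 2, V23 2 p q =
      if p = (q.1, q.2.2, q.2.1) then 1 else 0 := by
    rintro ⟨a, b, c⟩ ⟨x, y, z⟩
    simp only [V23, flipM, Matrix.kroneckerMap_apply, Matrix.one_apply, Prod.mk.injEq]
    split_ifs <;> simp_all
  have h3 : ∀ p q : Fin 2 × Fin 2 × Fin 2, (V23 2 * V12 2 * V23 2) p q =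
      if p.1 = q.2.2 ∧ p.2.2 = q.1 ∧ p.2.1 = q.2.1 then 1 else 0 := by
    intro p q
    rw [Matrix.mul_apply]
    simp only [h2' _ q, mul_ite, mul_one, mul_zero, Finset.sum_ite_eq', Finset.sum_ite_eq,
      Finset.mem_univ, if_true]
    rw [Matrix.mul_apply]
    simp only [h2 p, ite_mul, one_mul, zero_mul, Finset.sum_ite_eq', Finset.sum_ite_eq,
      Finset.mem_univ, if_true, h1]
  constructor
  all_goals
    ext ⟨a, b⟩ ⟨x, y⟩
    simp only [ptr, T2, werner2, Matrix.sub_apply, Matrix.smul_apply, h1, h3, flipM,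
      Matrix.one_apply, Fin.sum_univ_two, Prod.mk.injEq, smul_eq_mul]
    fin_cases a <;> fin_cases b <;> fin_cases x <;> fin_cases y <;> norm_num
end
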